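/- arXiv:2103.07698 — 2 statements merged into one kernel-verified Lean document; each statement's English description precedes it below -/
import Mathlib

section
/- For every τ in the complex upper half plane, E_{2,2}(τ)⁴ − E_{2,4}(τ)² = 256·(η(τ)η(2τ))⁸. -/
open Complex

/-- `q = exp(2πiτ)`. -/
noncomputable def qq (τ : ℂ) : ℂ := Complex.exp (2 * Real.pi * Complex.I * τ)

/-- `σ_k(n) = Σ_{d ∣ n} d^k`, as a complex number. -/
noncomputable def sigmaC (k n : ℕ) : ℂ := ∑ d ∈ n.divisors, (d : ℂ) ^ k

/-- Eisenstein series `E₂(τ) = 1 - 24 Σ_{n≥1} σ₁(n) qⁿ`. -/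
noncomputable def E₂ (τ : ℂ) : ℂ := 1 - 24 * ∑' n : ℕ, sigmaC 1 (n + 1) * qq τ ^ (n + 1)

/-- Eisenstein series `E₄(τ) = 1 + 240 Σ_{n≥1} σ₃(n) qⁿ`. -/
noncomputable def E₄ (τ : ℂ) : ℂ := 1 + 240 * ∑' n : ℕ, sigmaC 3 (n + 1) * qq τ ^ (n + 1)

/-- Eisenstein series `E₆(τ) = 1 - 504 Σ_{n≥1} σ₅(n) qⁿ`. -/
noncomputable def E₆ (τ : ℂ) : ℂ := 1 - 504 * ∑' n : ℕ, sigmaC 5 (n + 1) * qq τ ^ (n + 1)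

/-- Dedekind eta function `η(τ) = exp(πiτ/12) ∏_{n≥1} (1 - qⁿ)`. -/
noncomputable def η (τ : ℂ) : ℂ :=
  Complex.exp (Real.pi * Complex.I * τ / 12) * ∏' n : ℕ, (1 - qq τ ^ (n + 1))

/-- Theta function `θ(τ) = Σ_{n ∈ ℤ} q^{n²}`. -/
noncomputable def θ (τ : ℂ) : ℂ := ∑' n : ℤ, qq τ ^ (n ^ 2)

/-- The character `χ₋₄`: `χ₋₄(d) = 1, -1, 0` according as `d ≡ 1, 3, 0/2 (mod 4)`. -/
noncomputable def χ₄ (d : ℕ) : ℂ := if d % 4 = 1 then 1 else if d % 4 = 3 then -1 else 0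

/-- The character `χ₋₃`: `χ₋₃(d) = 1, -1, 0` according as `d ≡ 1, 2, 0 (mod 3)`. -/
noncomputable def χ₃ (d : ℕ) : ℂ := if d % 3 = 1 then 1 else if d % 3 = 2 then -1 else 0

/-- `E_{1,-4}(τ) = 1/4 + Σ_{n≥1} (Σ_{d∣n} χ₋₄(d)) qⁿ`. -/
noncomputable def E₁₄ (τ : ℂ) : ℂ :=
  1 / 4 + ∑' n : ℕ, (∑ d ∈ (n + 1).divisors, χ₄ d) * qq τ ^ (n + 1)

/-- `E_{1,-3}(τ) = 1/6 + Σ_{n≥1} (Σ_{d∣n} χ₋₃(d)) qⁿ`. -/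
noncomputable def E₁₃ (τ : ℂ) : ℂ :=
  1 / 6 + ∑' n : ℕ, (∑ d ∈ (n + 1).divisors, χ₃ d) * qq τ ^ (n + 1)

/-- `E_{2,2}(τ) = 2E₂(2τ) - E₂(τ)`. -/
noncomputable def E₂₂ (τ : ℂ) : ℂ := 2 * E₂ (2 * τ) - E₂ τ

/-- `E_{2,4}(τ) = (4E₄(2τ) - E₄(τ))/3`. -/
noncomputable def E₂₄ (τ : ℂ) : ℂ := (4 * E₄ (2 * τ) - E₄ τ) / 3

/-- `E_{3,2}(τ) = (3E₂(3τ) - E₂(τ))/2`. -/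
noncomputable def E₃₂ (τ : ℂ) : ℂ := (3 * E₂ (3 * τ) - E₂ τ) / 2

/-- `E_{3,4}(τ) = (9E₄(3τ) - E₄(τ))/8`. -/
noncomputable def E₃₄ (τ : ℂ) : ℂ := (9 * E₄ (3 * τ) - E₄ τ) / 8

/-- `E_{4,2}(τ) = (4E₂(4τ) - E₂(τ))/3`. -/
noncomputable def E₄₂ (τ : ℂ) : ℂ := (4 * E₂ (4 * τ) - E₂ τ) / 3

/-- `E'_{4,2}(τ) = 4E₂(4τ) - 4E₂(2τ) + E₂(τ)`. -/
noncomputable def E₄₂' (τ : ℂ) : ℂ := 4 * E₂ (4 * τ) - 4 * E₂ (2 * τ) + E₂ τ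

/-- `f_{1,j}(τ) = 2E₂(τ) - ((3+(-1)ʲi√3)/6)E₂(τ/2) - ((3-(-1)ʲi√3)/6)E₂((τ+1)/2)`. -/
noncomputable def f₁ (j : ℕ) (τ : ℂ) : ℂ :=
  2 * E₂ τ - ((3 + (-1 : ℂ) ^ j * Complex.I * Real.sqrt 3) / 6) * E₂ (τ / 2)
    - ((3 - (-1 : ℂ) ^ j * Complex.I * Real.sqrt 3) / 6) * E₂ ((τ + 1) / 2)

/-- `g_{1,j}(τ) = (3/2)E₂(τ) - (1/4) Σ_{0≤m≤2, m≢j (mod 3)} E₂((τ+m)/3)`. -/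
noncomputable def g₁ (j : ℕ) (τ : ℂ) : ℂ :=
  (3 / 2) * E₂ τ -
    (1 / 4) * ∑ m ∈ (Finset.range 3).filter (fun m => ¬ m % 3 = j % 3), E₂ ((τ + m) / 3)

/-- `f_{2,j}(τ) = 4E_{1,-4}(τ) + (-1)ʲ·2i·(E_{1,-4}(τ/2) - E_{1,-4}((τ+1)/2))`. -/
noncomputable def f₂ (j : ℕ) (τ : ℂ) : ℂ :=
  4 * E₁₄ τ + (-1 : ℂ) ^ j * 2 * Complex.I * (E₁₄ (τ / 2) - E₁₄ ((τ + 1) / 2))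

/-- `f_{3,j}(τ) = 6E_{1,-3}(2τ) + (-1)ʲ·i√3·(E_{1,-3}(τ/2) - E_{1,-3}((τ+1)/2))`. -/
noncomputable def f₃ (j : ℕ) (τ : ℂ) : ℂ :=
  6 * E₁₃ (2 * τ) +
    (-1 : ℂ) ^ j * Complex.I * Real.sqrt 3 * (E₁₃ (τ / 2) - E₁₃ ((τ + 1) / 2))

/-- `f_{4,j}(τ) = θ(τ/2 - (-1)ʲ/4)`. -/
noncomputable def f₄ (j : ℕ) (τ : ℂ) : ℂ := θ (τ / 2 - (-1 : ℂ) ^ j / 4)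

/-- `g_{4,j}(τ) = 2θ(2τ)² - θ((τ+j)/2)²`. -/
noncomputable def g₄ (j : ℕ) (τ : ℂ) : ℂ := 2 * θ (2 * τ) ^ 2 - θ ((τ + j) / 2) ^ 2

/-- `E_{3,-3,1}(τ) = -1/9 + Σ_{n≥1} (Σ_{d∣n} d²χ₋₃(d)) qⁿ`. -/
noncomputable def E₃₃₁ (τ : ℂ) : ℂ :=
  -(1 / 9) + ∑' n : ℕ, (∑ d ∈ (n + 1).divisors, (d : ℂ) ^ 2 * χ₃ d) * qq τ ^ (n + 1)

/-- `E_{3,1,-3}(τ) = Σ_{n≥1} (Σ_{d∣n} d²χ₋₃(n/d)) qⁿ`. -/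
noncomputable def E₃₁₃ (τ : ℂ) : ℂ :=
  ∑' n : ℕ, (∑ d ∈ (n + 1).divisors, (d : ℂ) ^ 2 * χ₃ ((n + 1) / d)) * qq τ ^ (n + 1)

/-!
The quotient `(E_{2,2}⁴ - E_{2,4}²) / (η(τ)η(2τ))⁸` is holomorphic on the upper half plane, because
`η` has no zeros there, and it is invariant under `τ ↦ τ + 1` and under the Fricke involution
`τ ↦ -1/(2τ)`; comparing the coefficients of `q` shows that it tends to `4·24 + 2·80 = 256` at `i∞`.
A function `f` with these symmetries is determined by its limit `L`: the product
`f(z) f(z/2) f((z+1)/2)` over the cosets of `Γ₀(2)` in `SL(2, ℤ)` is a modular form of level one and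
weight `0`, hence constant. For `f - f(τ₀)` in place of `f` this constant is `0`, as one sees at
`τ₀`, but it is also `(L - f(τ₀))³`, as one sees at `i∞`.
-/

open UpperHalfPlane hiding I
open Filter Topology
open scoped MatrixGroups Manifold

/-! ### Level-one functions and Fricke-invariant functions -/

lemma coe_modular_S_smul (z : ℍ) : ((ModularGroup.S • z : ℍ) : ℂ) = -1 / z := by
  rw [modular_S_smul, UpperHalfPlane.coe_mk, inv_neg, neg_div, one_div]

lemma coe_modular_T_smul (z : ℍ) : ((ModularGroup.T • z : ℍ) : ℂ) = z + 1 := by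
  rw [modular_T_smul, coe_vadd, add_comm, ofReal_one]

lemma neg_one_div_im_pos {τ : ℂ} (hτ : 0 < τ.im) : 0 < (-1 / τ).im := by
  simpa [neg_div, inv_neg] using UpperHalfPlane.im_inv_neg_coe_pos ⟨τ, hτ⟩

theorem exists_eq_const_of_S_smul_of_T_smul {g : ℍ → ℂ}
    (hS : ∀ z, g (ModularGroup.S • z) = g z) (hT : ∀ z, g (ModularGroup.T • z) = g z)
    (hol : MDiff g) (hbdd : IsBoundedAtImInfty g) : ∃ c, g = Function.const ℍ c := by
  have hslash (γ : SL(2, ℤ)) : SlashAction.map (0 : ℤ) γ g = g := by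
    refine SlashInvariantForm.slash_action_generators_SL2Z ?_ ?_ γ <;> ext z
    · simpa [ModularForm.SL_slash_apply] using hS z
    · simpa [ModularForm.SL_slash_apply] using hT z
  let G : ModularForm 𝒮ℒ 0 :=
    { toFun := g
      slash_action_eq' := by
        rintro _ ⟨γ, rfl⟩
        exact hslash γ
      holo' := hol
      bdd_at_cusps' := fun hc ↦ by
        rw [Subgroup.IsArithmetic.isCusp_iff_isCusp_SL2Z] at hc
        rw [OnePoint.isBoundedAt_iff_forall_SL2Z hc]
        intro γ _
        rwa [hslash] }
  exact ModularFormClass.levelOne_weight_zero_const G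

/-- Invariance under the group `Γ₀(2)⁺` generated by the translation `τ ↦ τ + 1` and the Fricke
involution `τ ↦ -1 / (2τ)`. The function is defined on all of `ℂ`, but only its values on the upper
half plane are constrained. -/
structure IsFrickeInvariant {α : Type*} (f : ℂ → α) : Prop where
  add_one {τ : ℂ} : 0 < τ.im → f (τ + 1) = f τ
  neg_one_div_two_mul {τ : ℂ} : 0 < τ.im → f (-1 / (2 * τ)) = f τ

/-- The norm from `Γ₀(2)` to `SL(2, ℤ)` of a Fricke-invariant function `f` of weight `0`, that is,
the product of its translates over the cosets of `Γ₀(2)` in `SL(2, ℤ)`. Fricke invariance turns the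
translates `f (-1 / z)` and `f (-1 / (z + 1))` into `f (z / 2)` and `f ((z + 1) / 2)`. -/
noncomputable def levelOneNorm {M : Type*} [Mul M] (f : ℂ → M) (z : ℍ) : M :=
  f z * f (z / 2) * f ((z + 1) / 2)

lemma tendsto_levelOneNorm {M : Type*} [Monoid M] [TopologicalSpace M] [ContinuousMul M]
    {f : ℂ → M} {L : M} (hL : Tendsto f (comap Complex.im atTop) (𝓝 L)) :
    Tendsto (levelOneNorm f) atImInfty (𝓝 (L ^ 3)) := by
  have him : Tendsto (fun z : ℍ ↦ z.im) atImInfty atTop := tendsto_comap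
  have h₁ : Tendsto (fun z : ℍ ↦ (z : ℂ)) atImInfty (comap Complex.im atTop) :=
    tendsto_comap_iff.mpr him
  have h₂ : Tendsto (fun z : ℍ ↦ (z / 2 : ℂ)) atImInfty (comap Complex.im atTop) :=
    tendsto_comap_iff.mpr ((him.atTop_div_const two_pos).congr fun z ↦ by simp)
  have h₃ : Tendsto (fun z : ℍ ↦ ((z + 1) / 2 : ℂ)) atImInfty (comap Complex.im atTop) :=
    tendsto_comap_iff.mpr ((him.atTop_div_const two_pos).congr fun z ↦ by simp)
  rw [pow_three']
  exact ((hL.comp h₁).mul (hL.comp h₂)).mul (hL.comp h₃)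

lemma mdifferentiable_levelOneNorm {f : ℂ → ℂ} (hf : DifferentiableOn ℂ f {z | 0 < z.im}) :
    MDiff (levelOneNorm f) := by
  rw [UpperHalfPlane.mdifferentiable_iff]
  have h₂ := hf.comp (f := fun z : ℂ ↦ z / 2) (s := {z | 0 < z.im}) (by fun_prop)
    fun z hz ↦ by simpa using hz
  have h₃ := hf.comp (f := fun z : ℂ ↦ (z + 1) / 2) (s := {z | 0 < z.im}) (by fun_prop)
    fun z hz ↦ by simpa using hz
  refine ((hf.mul h₂).mul h₃).congr fun z hz ↦ ?_
  simp [levelOneNorm, ofComplex_apply_of_im_pos hz]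

namespace IsFrickeInvariant

variable {α M : Type*} {f : ℂ → α}

lemma comp_left (hf : IsFrickeInvariant f) {β : Type*} (g : α → β) :
    IsFrickeInvariant fun τ ↦ g (f τ) where
  add_one hτ := congrArg g (hf.add_one hτ)
  neg_one_div_two_mul hτ := congrArg g (hf.neg_one_div_two_mul hτ)

lemma sub_one (hf : IsFrickeInvariant f) {τ : ℂ} (hτ : 0 < τ.im) : f (τ - 1) = f τ := by
  simpa using (hf.add_one (τ := τ - 1) (by simpa using hτ)).symm

lemma neg_one_div (hf : IsFrickeInvariant f) {τ : ℂ} (hτ : 0 < τ.im) :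
    f (-1 / τ) = f (τ / 2) := by
  simpa [mul_div_cancel₀] using hf.neg_one_div_two_mul (τ := τ / 2) (by simpa using hτ)

lemma neg_one_div_div_two (hf : IsFrickeInvariant f) {τ : ℂ} (hτ : 0 < τ.im) :
    f (-1 / τ / 2) = f τ := by
  rw [div_div, mul_comm, hf.neg_one_div_two_mul hτ]

lemma neg_one_div_add_one_div_two (hf : IsFrickeInvariant f) {τ : ℂ} (hτ : 0 < τ.im) :
    f ((-1 / τ + 1) / 2) = f ((τ + 1) / 2) := by
  have hτ₁ : 0 < (τ - 1).im := by simpa using hτ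
  have hw : 0 < (-1 / (τ - 1)).im := neg_one_div_im_pos hτ₁
  have hτ0 : τ ≠ 0 := by rintro rfl; simp at hτ
  have hτ10 : τ - 1 ≠ 0 := fun h ↦ by simp [h] at hτ₁
  calc f ((-1 / τ + 1) / 2)
    _ = f (-1 / (2 * (-1 / (τ - 1) - 1))) := by
      rw [show -1 / (τ - 1) - 1 = -τ / (τ - 1) by field_simp; ring]
      congr 1
      field_simp
      ring
    _ = f (-1 / (τ - 1) - 1) := hf.neg_one_div_two_mul (by simpa using hw)
    _ = f (-1 / (τ - 1)) := hf.sub_one hw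
    _ = f ((τ - 1) / 2) := hf.neg_one_div hτ₁
    _ = f ((τ - 1) / 2 + 1) := (hf.add_one (by simpa using hτ)).symm
    _ = f ((τ + 1) / 2) := by ring_nf

section Norm

variable [CommSemigroup M] {f : ℂ → M}

lemma levelOneNorm_S_smul (hf : IsFrickeInvariant f) (z : ℍ) :
    levelOneNorm f (ModularGroup.S • z) = levelOneNorm f z := by
  rw [levelOneNorm, levelOneNorm, coe_modular_S_smul, hf.neg_one_div z.im_pos,
    hf.neg_one_div_div_two z.im_pos, hf.neg_one_div_add_one_div_two z.im_pos, mul_comm (f z)]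

lemma levelOneNorm_T_smul (hf : IsFrickeInvariant f) (z : ℍ) :
    levelOneNorm f (ModularGroup.T • z) = levelOneNorm f z := by
  have hz : 0 < ((z : ℂ) / 2).im := by simpa using z.im_pos
  rw [levelOneNorm, levelOneNorm, coe_modular_T_smul, hf.add_one z.im_pos,
    show ((z : ℂ) + 1 + 1) / 2 = z / 2 + 1 by ring, hf.add_one hz, mul_right_comm]

end Norm

theorem eq_of_tendsto {f : ℂ → ℂ} (hf : IsFrickeInvariant f)
    (hol : DifferentiableOn ℂ f {z | 0 < z.im}) {L : ℂ}
    (hL : Tendsto f (comap Complex.im atTop) (𝓝 L)) {τ : ℂ} (hτ : 0 < τ.im) : f τ = L := by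
  have hg : IsFrickeInvariant fun z ↦ f z - f τ := hf.comp_left (· - f τ)
  have hlim := tendsto_levelOneNorm (hL.sub_const (f τ))
  obtain ⟨c, hc⟩ := exists_eq_const_of_S_smul_of_T_smul hg.levelOneNorm_S_smul
    hg.levelOneNorm_T_smul (mdifferentiable_levelOneNorm (hol.sub_const (f τ)))
    (hlim.isBigO_one ℝ)
  have hc₀ : c = 0 := by simpa [levelOneNorm] using (congrFun hc ⟨τ, hτ⟩).symm
  have hcL : (L - f τ) ^ 3 = c := by
    rw [hc] at hlim
    exact tendsto_nhds_unique hlim tendsto_const_nhds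
  exact (sub_eq_zero.mp (eq_zero_of_pow_eq_zero (hcL.trans hc₀))).symm

end IsFrickeInvariant

/-! ### Transformation laws -/

lemma sigmaC_eq_sigma (k n : ℕ) : sigmaC k n = (ArithmeticFunction.sigma k n : ℂ) := by
  simp [sigmaC, ArithmeticFunction.sigma_apply]

lemma E₂_eq_eisenstein (z : ℍ) : E₂ z = EisensteinSeries.E2 z := by
  rw [EisensteinSeries.E2_eq_tsum_cexp,
    tsum_pnat_eq_tsum_succ (f := fun n : ℕ ↦
      (ArithmeticFunction.sigma 1 n : ℂ) * cexp (2 * Real.pi * I * z) ^ n)]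
  simp [E₂, qq, sigmaC_eq_sigma]

lemma E₄_eq_eisenstein (z : ℍ) : E₄ z = ModularForm.E₄ z := by
  have h := EisensteinSeries.q_expansion_bernoulli (k := 4) (by norm_num) (by decide) z
  simp only [zpow_natCast] at h
  rw [tsum_pnat_eq_tsum_succ (f := fun n : ℕ ↦
      (ArithmeticFunction.sigma (4 - 1) n : ℂ) * cexp (2 * Real.pi * I * z) ^ n),
    show bernoulli 4 = -1 / 30 by decide +kernel] at h
  rw [h]
  norm_num [E₄, qq, sigmaC_eq_sigma]

lemma η_eq_eta (τ : ℂ) : η τ = ModularForm.eta τ := by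
  simp only [η, ModularForm.eta, ModularForm.eta_q_eq_pow, qq, Function.Periodic.qParam]
  congr 2
  push_cast
  ring

lemma E₂_neg_one_div {τ : ℂ} (hτ : 0 < τ.im) :
    E₂ (-1 / τ) = τ ^ 2 * E₂ τ - 6 * I / Real.pi * τ := by
  lift τ to ℍ using hτ
  have hτ0 := τ.ne_zero
  have hpi : (Real.pi : ℂ) ≠ 0 := by exact_mod_cast Real.pi_ne_zero
  rw [← coe_modular_S_smul, E₂_eq_eisenstein, E₂_eq_eisenstein]
  simp only [EisensteinSeries.E2, Pi.smul_apply, smul_eq_mul, EisensteinSeries.G2_S_transform τ,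
    riemannZeta_two]
  field_simp
  ring

lemma E₄_neg_one_div {τ : ℂ} (hτ : 0 < τ.im) : E₄ (-1 / τ) = τ ^ 4 * E₄ τ := by
  lift τ to ℍ using hτ
  have : SlashInvariantFormClass (ModularForm 𝒮ℒ 4) (CongruenceSubgroup.Gamma 1) 4 :=
    CongruenceSubgroup.Gamma_one_coe_eq_SL ▸ inferInstance
  rw [← coe_modular_S_smul, E₄_eq_eisenstein, E₄_eq_eisenstein,
    SlashInvariantForm.slash_action_eqn_SL'' _ (CongruenceSubgroup.mem_Gamma_one ModularGroup.S),
    ModularGroup.denom_S]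
  rfl

lemma η_neg_one_div_pow_eight {τ : ℂ} (hτ : 0 < τ.im) : η (-1 / τ) ^ 8 = τ ^ 4 * η τ ^ 8 := by
  have hsqrt (z : ℂ) : Complex.sqrt z ^ 8 = z ^ 4 := by
    rw [pow_mul _ 2 4, Complex.sqrt, cpow_ofNat_inv_pow]
  have h : ModularForm.eta (-1 / τ) = (Complex.sqrt I)⁻¹ * (Complex.sqrt τ * ModularForm.eta τ) :=
    ModularForm.eta_comp_eq_csqrt_I_inv hτ
  rw [η_eq_eta, η_eq_eta, h, mul_pow, mul_pow, inv_pow, hsqrt, hsqrt, I_pow_four, inv_one, one_mul]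

lemma two_mul_im_pos {τ : ℂ} (hτ : 0 < τ.im) : 0 < (2 * τ).im := by
  simpa using hτ

lemma two_mul_neg_one_div_two_mul (τ : ℂ) : 2 * (-1 / (2 * τ)) = -1 / τ := by
  ring

lemma E₂₂_neg_one_div_two_mul {τ : ℂ} (hτ : 0 < τ.im) :
    E₂₂ (-1 / (2 * τ)) = -2 * τ ^ 2 * E₂₂ τ := by
  rw [E₂₂, E₂₂, two_mul_neg_one_div_two_mul, E₂_neg_one_div hτ,
    E₂_neg_one_div (two_mul_im_pos hτ)]
  ring

lemma E₂₄_neg_one_div_two_mul {τ : ℂ} (hτ : 0 < τ.im) :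
    E₂₄ (-1 / (2 * τ)) = -4 * τ ^ 4 * E₂₄ τ := by
  rw [E₂₄, E₂₄, two_mul_neg_one_div_two_mul, E₄_neg_one_div hτ,
    E₄_neg_one_div (two_mul_im_pos hτ)]
  ring

lemma η_mul_η_neg_one_div_two_mul_pow_eight {τ : ℂ} (hτ : 0 < τ.im) :
    (η (-1 / (2 * τ)) * η (2 * (-1 / (2 * τ)))) ^ 8 = 16 * τ ^ 8 * (η τ * η (2 * τ)) ^ 8 := by
  rw [two_mul_neg_one_div_two_mul, mul_pow, η_neg_one_div_pow_eight hτ,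
    η_neg_one_div_pow_eight (two_mul_im_pos hτ)]
  ring

lemma η_ne_zero {τ : ℂ} (hτ : 0 < τ.im) : η τ ≠ 0 := by
  rw [η_eq_eta]
  exact ModularForm.eta_ne_zero hτ

lemma η_mul_η_two_mul_ne_zero {τ : ℂ} (hτ : 0 < τ.im) : η τ * η (2 * τ) ≠ 0 :=
  mul_ne_zero (η_ne_zero hτ) (η_ne_zero (two_mul_im_pos hτ))

lemma differentiableOn_E₂ : DifferentiableOn ℂ E₂ {z | 0 < z.im} :=
  (UpperHalfPlane.mdifferentiable_iff.mp E2_mdifferentiable).congr fun z hz ↦ by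
    simpa [ofComplex_apply_of_im_pos hz] using E₂_eq_eisenstein ⟨z, hz⟩

lemma differentiableOn_E₄ : DifferentiableOn ℂ E₄ {z | 0 < z.im} :=
  (UpperHalfPlane.mdifferentiable_iff.mp ModularForm.E₄.holo').congr fun z hz ↦ by
    simpa [ofComplex_apply_of_im_pos hz] using E₄_eq_eisenstein ⟨z, hz⟩

lemma differentiableOn_η : DifferentiableOn ℂ η {z | 0 < z.im} := fun z hz ↦ by
  rw [funext η_eq_eta]
  exact (ModularForm.differentiableAt_eta_of_mem_upperHalfPlaneSet hz).differentiableWithinAt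

lemma differentiableOn_comp_two_mul {f : ℂ → ℂ} (hf : DifferentiableOn ℂ f {z | 0 < z.im}) :
    DifferentiableOn ℂ (fun z ↦ f (2 * z)) {z | 0 < z.im} :=
  hf.comp (by fun_prop) fun _ ↦ two_mul_im_pos

lemma differentiableOn_E₂₂ : DifferentiableOn ℂ E₂₂ {z | 0 < z.im} :=
  ((differentiableOn_comp_two_mul differentiableOn_E₂).const_mul 2).sub differentiableOn_E₂

lemma differentiableOn_E₂₄ : DifferentiableOn ℂ E₂₄ {z | 0 < z.im} :=
  (((differentiableOn_comp_two_mul differentiableOn_E₄).const_mul 4).sub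
    differentiableOn_E₄).div_const 3

/-! ### Behaviour at `q = 0` -/

theorem hasDerivAt_tsum_mul_pow_zero {𝕜 : Type*} [NontriviallyNormedField 𝕜] [CompleteSpace 𝕜]
    {a : ℕ → 𝕜} {r : 𝕜} (hr : r ≠ 0) (ha : Summable fun n ↦ a n * r ^ n) :
    HasDerivAt (fun q ↦ ∑' n, a n * q ^ n) (a 1) 0 := by
  let p := FormalMultilinearSeries.ofScalars 𝕜 a
  have hrad : (‖r‖₊ : ENNReal) ≤ p.radius := by
    refine p.le_radius_of_tendsto (l := 0) ?_
    simpa [p, FormalMultilinearSeries.ofScalars_norm] using ha.tendsto_atTop_zero.norm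
  have hp : 0 < p.radius := (by simpa using hr : (0 : ENNReal) < ‖r‖₊).trans_le hrad
  have h := (p.hasFPowerSeriesOnBall hp).hasFPowerSeriesAt.hasDerivAt
  have hsum : p.sum = fun q ↦ ∑' n, a n * q ^ n :=
    FormalMultilinearSeries.ofScalarsSum_eq_tsum a
  rw [← hsum]
  simpa [p, FormalMultilinearSeries.ofScalars_apply_eq] using h

/-- The power series `Σ_{n≥1} σ_k(n) qⁿ`, as a function of `q`. -/
noncomputable def sigmaSeries (k : ℕ) (q : ℂ) : ℂ := ∑' n : ℕ, sigmaC k (n + 1) * q ^ (n + 1)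

lemma sigmaSeries_zero (k : ℕ) : sigmaSeries k 0 = 0 := by
  simp [sigmaSeries]

lemma summable_sigmaC_mul_half_pow (k : ℕ) :
    Summable fun n : ℕ ↦ sigmaC k n * (1 / 2) ^ n := by
  refine .of_norm_bounded (summable_pow_mul_geometric_of_norm_lt_one (k + 1)
    (r := (1 / 2 : ℝ)) (by norm_num)) fun n ↦ ?_
  rw [sigmaC_eq_sigma, norm_mul, norm_pow, Complex.norm_natCast, norm_div, norm_one,
    Complex.norm_ofNat]
  gcongr
  exact_mod_cast ArithmeticFunction.sigma_le_pow_succ k n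

lemma hasDerivAt_sigmaSeries_zero (k : ℕ) : HasDerivAt (sigmaSeries k) 1 0 := by
  have h : sigmaSeries k = fun q ↦ ∑' n, sigmaC k n * q ^ n := by
    funext q
    refine Nat.succ_injective.tsum_eq (f := fun n ↦ sigmaC k n * q ^ n) fun n hn ↦ ?_
    rw [Nat.range_succ]
    exact Nat.pos_of_ne_zero fun h ↦ hn (by simp [h, sigmaC])
  rw [h]
  simpa [sigmaC] using
    hasDerivAt_tsum_mul_pow_zero (by norm_num) (summable_sigmaC_mul_half_pow k)

lemma hasDerivAt_sigmaSeries_sq_zero (k : ℕ) :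
    HasDerivAt (fun q ↦ sigmaSeries k (q ^ 2)) 0 0 := by
  simpa [Function.comp_def] using
    (hasDerivAt_sigmaSeries_zero k).comp_of_eq (0 : ℂ) (hasDerivAt_pow 2 0) (by simp)

lemma qq_ne_zero (τ : ℂ) : qq τ ≠ 0 := Complex.exp_ne_zero _

lemma qq_two_mul (τ : ℂ) : qq (2 * τ) = qq τ ^ 2 := by
  rw [qq, qq, ← Complex.exp_nat_mul]
  push_cast
  ring_nf

lemma qq_add_one (τ : ℂ) : qq (τ + 1) = qq τ := by
  rw [qq, qq, mul_add, mul_one, Complex.exp_add, Complex.exp_two_pi_mul_I, mul_one]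

lemma tendsto_qq : Tendsto qq (comap Complex.im atTop) (𝓝[≠] 0) :=
  (Function.Periodic.qParam_tendsto one_pos).congr fun τ ↦ by
    simp [qq, Function.Periodic.qParam]

lemma E₂₂_eq_sigmaSeries (τ : ℂ) :
    E₂₂ τ = 1 - 48 * sigmaSeries 1 (qq τ ^ 2) + 24 * sigmaSeries 1 (qq τ) := by
  rw [E₂₂, E₂, E₂, qq_two_mul, sigmaSeries, sigmaSeries]
  ring

lemma E₂₄_eq_sigmaSeries (τ : ℂ) :
    E₂₄ τ = 1 + 320 * sigmaSeries 3 (qq τ ^ 2) - 80 * sigmaSeries 3 (qq τ) := by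
  rw [E₂₄, E₄, E₄, qq_two_mul, sigmaSeries, sigmaSeries]
  ring

lemma tendsto_E₂₂_pow_four_sub_E₂₄_sq_div_qq :
    Tendsto (fun τ ↦ (E₂₂ τ ^ 4 - E₂₄ τ ^ 2) / qq τ) (comap Complex.im atTop) (𝓝 256) := by
  have h₂ : HasDerivAt (fun q ↦ 1 - 48 * sigmaSeries 1 (q ^ 2) + 24 * sigmaSeries 1 q) 24 0 := by
    simpa using (((hasDerivAt_sigmaSeries_sq_zero 1).const_mul 48).const_sub 1).fun_add
      ((hasDerivAt_sigmaSeries_zero 1).const_mul 24)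
  have h₄ : HasDerivAt (fun q ↦ 1 + 320 * sigmaSeries 3 (q ^ 2) - 80 * sigmaSeries 3 q)
      (-80) 0 := by
    simpa using (((hasDerivAt_sigmaSeries_sq_zero 3).const_mul 320).const_add 1).fun_sub
      ((hasDerivAt_sigmaSeries_zero 3).const_mul 80)
  have h := (hasDerivAt_iff_tendsto_slope_zero.mp ((h₂.pow 4).sub (h₄.pow 2))).comp tendsto_qq
  convert! h using 2 with τ
  · simp [E₂₂_eq_sigmaSeries, E₂₄_eq_sigmaSeries, sigmaSeries_zero, div_eq_inv_mul]
  · norm_num [sigmaSeries_zero]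

lemma tendsto_tprod_one_sub_pow :
    Tendsto (fun q : ℂ ↦ ∏' n : ℕ, (1 - q ^ (n + 1))) (𝓝 0) (𝓝 1) := by
  have h := (ModularForm.differentiableOn_tprod_one_sub_pow.differentiableAt
    (Metric.ball_mem_nhds 0 one_pos)).continuousAt.tendsto
  simpa using h

lemma η_mul_η_two_mul_pow_eight (τ : ℂ) : (η τ * η (2 * τ)) ^ 8 =
    qq τ * ((∏' n : ℕ, (1 - qq τ ^ (n + 1))) * ∏' n : ℕ, (1 - (qq τ ^ 2) ^ (n + 1))) ^ 8 := by
  have h : qq τ = (cexp (Real.pi * I * τ / 12) * cexp (Real.pi * I * (2 * τ) / 12)) ^ 8 := by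
    rw [qq, ← Complex.exp_add, ← Complex.exp_nat_mul]
    push_cast
    ring_nf
  rw [η, η, qq_two_mul]
  nth_rw 3 [h]
  ring

lemma tendsto_η_mul_η_two_mul_pow_eight_div_qq :
    Tendsto (fun τ ↦ (η τ * η (2 * τ)) ^ 8 / qq τ) (comap Complex.im atTop) (𝓝 1) := by
  have hq : Tendsto qq (comap Complex.im atTop) (𝓝 0) := tendsto_qq.mono_right nhdsWithin_le_nhds
  have hq2 : Tendsto (fun τ ↦ qq τ ^ 2) (comap Complex.im atTop) (𝓝 0) := by
    simpa using hq.pow 2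
  have h := ((tendsto_tprod_one_sub_pow.comp hq).mul (tendsto_tprod_one_sub_pow.comp hq2)).pow 8
  rw [one_mul, one_pow] at h
  refine h.congr fun τ ↦ ?_
  rw [η_mul_η_two_mul_pow_eight, mul_div_cancel_left₀ _ (qq_ne_zero τ)]
  rfl

/-! ### The quotient -/

/-- The quotient `(E_{2,2}⁴ - E_{2,4}²) / (η(τ)η(2τ))⁸`, of weight `0` for `Γ₀(2)`; the theorem says
that it is constant. The denominator has no zeros on the upper half plane. -/
noncomputable def frickeQuotient (τ : ℂ) : ℂ :=
  (E₂₂ τ ^ 4 - E₂₄ τ ^ 2) / (η τ * η (2 * τ)) ^ 8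

lemma isFrickeInvariant_frickeQuotient : IsFrickeInvariant frickeQuotient where
  add_one _ := by
    simp only [frickeQuotient, η_mul_η_two_mul_pow_eight, E₂₂_eq_sigmaSeries, E₂₄_eq_sigmaSeries,
      qq_add_one]
  neg_one_div_two_mul {τ} hτ := by
    have hτ0 : τ ≠ 0 := by rintro rfl; simp at hτ
    have hc : 16 * τ ^ 8 ≠ 0 := mul_ne_zero (by norm_num) (pow_ne_zero 8 hτ0)
    rw [frickeQuotient, frickeQuotient, E₂₂_neg_one_div_two_mul hτ, E₂₄_neg_one_div_two_mul hτ,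
      η_mul_η_neg_one_div_two_mul_pow_eight hτ, ← mul_div_mul_left _ ((η τ * _) ^ 8) hc]
    congr 1
    ring

lemma differentiableOn_frickeQuotient : DifferentiableOn ℂ frickeQuotient {z | 0 < z.im} :=
  ((differentiableOn_E₂₂.pow 4).sub (differentiableOn_E₂₄.pow 2)).div
    ((differentiableOn_η.mul (differentiableOn_comp_two_mul differentiableOn_η)).pow 8)
    fun _ hz ↦ pow_ne_zero 8 (η_mul_η_two_mul_ne_zero hz)

lemma tendsto_frickeQuotient : Tendsto frickeQuotient (comap Complex.im atTop) (𝓝 256) := by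
  have h := tendsto_E₂₂_pow_four_sub_E₂₄_sq_div_qq.div tendsto_η_mul_η_two_mul_pow_eight_div_qq
    one_ne_zero
  rw [div_one] at h
  exact h.congr fun τ ↦ div_div_div_cancel_right₀ (qq_ne_zero τ) _ _

theorem stmt7 (τ : ℂ) (hτ : 0 < τ.im) :
    E₂₂ τ ^ 4 - E₂₄ τ ^ 2 = 256 * (η τ * η (2 * τ)) ^ 8 := by
  have hconst : frickeQuotient τ = 256 := isFrickeInvariant_frickeQuotient.eq_of_tendsto
    differentiableOn_frickeQuotient tendsto_frickeQuotient hτ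
  exact (div_eq_iff (pow_ne_zero 8 (η_mul_η_two_mul_ne_zero hτ))).mp hconst
end

section
/- For every τ in the complex upper half plane, E_{3,2}(τ) = 36·E_{1,−3}(τ)², i.e. E_{3,2} = (6E_{1,−3})². -/
open Complex

/-!
Write `uₙ = qⁿ / (1 - qⁿ)`. Ramanujan's identity evaluates
`(cot (t / 2) / 4 + ∑ uₙ sin (n t))²`: the square of the sine series is
`½ ∑ uᵢ uⱼ (cos ((i - j) t) - cos ((i + j) t))`, and the relation
`uᵢ uⱼ = uᵢ₊ⱼ (1 + uᵢ + uⱼ)` collapses both halves to single sums, the second along the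
antidiagonals `i + j = n` and the first by telescoping in `i` with `k = j - i` fixed. Besides
multiples of `uₙ`, `n uₙ` and `uₙ²` this leaves partial sums `∑_{k < n} cos (k t)`, which the
Dirichlet kernel identity for `cot (t / 2) sin (n t)` cancels. Adding
`∑ n uₙ - ∑ uₙ (1 + uₙ) = 0`, where both sums are `∑ σ₁(n) qⁿ`, gives the final form.

For `t = 2π / 3` one has `cot (t / 2) = 1 / √3` and `sin (n t) = (√3 / 2) χ₋₃(n)`, while `cos (n t)`
is `1` or `-1 / 2` according as `3` divides `n` or not. The left side is therefore a multiple of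
`E_{1,-3}²`, and the right side splits into Lambert series in `q` and in `q³`, which are those of
`E₂(τ)` and `E₂(3τ)`.
-/

open Finset.HasAntidiagonal (antidiagonal)

section DoubleSeries

variable {E : Type*} [AddCommMonoid E] [TopologicalSpace E] [ContinuousAdd E] {f : ℕ × ℕ → E}

theorem hasSum_of_hasSum_diag_upper_lower {a b c : E} (hdiag : HasSum (fun n ↦ f (n, n)) a)
    (hupper : HasSum (fun p : ℕ × ℕ ↦ f (p.2, p.2 + p.1 + 1)) b)
    (hlower : HasSum (fun p : ℕ × ℕ ↦ f (p.2 + p.1 + 1, p.2)) c) :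
    HasSum f (a + (b + c)) := by
  let e : ℕ ⊕ (ℕ × ℕ) ⊕ (ℕ × ℕ) → ℕ × ℕ :=
    Sum.elim (fun n ↦ (n, n))
      (Sum.elim (fun p ↦ (p.2, p.2 + p.1 + 1)) fun p ↦ (p.2 + p.1 + 1, p.2))
  have e_injective : e.Injective := by
    rintro (n | ⟨k, i⟩ | ⟨k, i⟩) (m | ⟨l, j⟩ | ⟨l, j⟩) h <;>
      simp only [e, Sum.elim_inl, Sum.elim_inr, Prod.mk.injEq] at h <;> grind
  have e_surjective : e.Surjective := by
    rintro ⟨i, j⟩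
    rcases lt_trichotomy i j with h | rfl | h
    · exact ⟨.inr (.inl (j - i - 1, i)), by simp [e]; lia⟩
    · exact ⟨.inl i, rfl⟩
    · exact ⟨.inr (.inr (i - j - 1, j)), by simp [e]; lia⟩
  exact (Equiv.ofBijective e ⟨e_injective, e_surjective⟩).hasSum_iff.mp
    (hdiag.sum (hupper.sum hlower))

theorem hasSum_sum_antidiagonal [RegularSpace E] {a : E} (hf : HasSum f a) :
    HasSum (fun n ↦ ∑ p ∈ antidiagonal n, f p) a := by
  refine (Finset.HasAntidiagonal.sigmaAntidiagonalEquivProd.hasSum_iff.mpr hf).sigma fun n ↦ ?_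
  rw [← Finset.sum_coe_sort]
  exact hasSum_fintype _

theorem sum_antidiagonal_one_add_add {R : Type*} [Semiring R] (f : ℕ → R) (n : ℕ) :
    ∑ p ∈ antidiagonal n, (1 + f p.1 + f p.2) = n + 1 + 2 * ∑ i ∈ Finset.range (n + 1), f i := by
  have hfst : ∑ p ∈ antidiagonal n, f p.1 = ∑ i ∈ Finset.range (n + 1), f i :=
    Finset.Nat.sum_antidiagonal_eq_sum_range_succ (fun i _ ↦ f i) n
  have hsnd : ∑ p ∈ antidiagonal n, f p.2 = ∑ p ∈ antidiagonal n, f p.1 :=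
    Finset.Nat.sum_antidiagonal_swap (f := fun p ↦ f p.1)
  rw [Finset.sum_add_distrib, Finset.sum_add_distrib, hsnd, hfst, Finset.sum_const,
    Finset.Nat.card_antidiagonal, nsmul_one, two_mul, add_assoc]
  push_cast
  rfl

end DoubleSeries

theorem summable_mul_of_norm_le {R ι : Type*} [NormedRing R] [CompleteSpace R] {w f : ι → R}
    {C : ℝ} (hw : ∀ i, ‖w i‖ ≤ C) (hf : Summable fun i ↦ ‖f i‖) : Summable fun i ↦ w i * f i :=
  .of_norm_bounded (hf.mul_left C) fun i ↦
    (norm_mul_le _ _).trans (mul_le_mul_of_nonneg_right (hw i) (norm_nonneg _))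

/-- The term `qⁿ / (1 - qⁿ)` of a Lambert series. At `n = 0`, where the denominator vanishes, it is
`0` because division by zero is. -/
noncomputable def lambertTerm {K : Type*} [Field K] (q : K) (n : ℕ) : K := q ^ n / (1 - q ^ n)

section LambertTerm

theorem lambertTerm_mul_lambertTerm {K : Type*} [Field K] {q : K} {i j : ℕ} (hi : q ^ i ≠ 1)
    (hj : q ^ j ≠ 1) (hij : q ^ (i + j) ≠ 1) :
    lambertTerm q i * lambertTerm q j
      = lambertTerm q (i + j) * (1 + lambertTerm q i + lambertTerm q j) := by
  have hi' : 1 - q ^ i ≠ 0 := sub_ne_zero.mpr hi.symm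
  have hj' : 1 - q ^ j ≠ 0 := sub_ne_zero.mpr hj.symm
  have hij' : 1 - q ^ i * q ^ j ≠ 0 := sub_ne_zero.mpr (pow_add q i j ▸ hij.symm)
  simp only [lambertTerm, pow_add]
  field_simp
  ring

theorem lambertTerm_mul_lambertTerm_add {K : Type*} [Field K] {q : K} {i k : ℕ} (hi : q ^ i ≠ 1)
    (hk : q ^ k ≠ 1) (hik : q ^ (i + k) ≠ 1) :
    lambertTerm q i * lambertTerm q (i + k)
      = lambertTerm q k * (lambertTerm q i - lambertTerm q (i + k)) - lambertTerm q (i + k) := by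
  linear_combination -lambertTerm_mul_lambertTerm hi hk hik

theorem lambertTerm_pow {K : Type*} [Field K] (q : K) (m n : ℕ) :
    lambertTerm (q ^ m) n = lambertTerm q (m * n) := by
  simp only [lambertTerm, ← pow_mul]

variable {𝕜 : Type*} [NormedField 𝕜] {q : 𝕜}

theorem norm_lambertTerm_le (hq : ‖q‖ < 1) (n : ℕ) :
    ‖lambertTerm q n‖ ≤ (1 - ‖q‖)⁻¹ * ‖q‖ ^ n := by
  have : 0 < 1 - ‖q‖ := sub_pos.mpr hq
  rcases eq_or_ne n 0 with rfl | hn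
  · simpa [lambertTerm] using hq.le
  have hden : 1 - ‖q‖ ≤ ‖1 - q ^ n‖ := calc
    1 - ‖q‖ ≤ 1 - ‖q‖ ^ n := sub_le_sub_left (pow_le_of_le_one (norm_nonneg q) hq.le hn) 1
    _ = ‖(1 : 𝕜)‖ - ‖q ^ n‖ := by rw [norm_one, norm_pow]
    _ ≤ ‖1 - q ^ n‖ := norm_sub_norm_le _ _
  rw [lambertTerm, norm_div, norm_pow, div_eq_inv_mul]
  gcongr

theorem norm_lambertTerm_le_inv (hq : ‖q‖ < 1) (n : ℕ) : ‖lambertTerm q n‖ ≤ (1 - ‖q‖)⁻¹ :=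
  (norm_lambertTerm_le hq n).trans <| mul_le_of_le_one_right
    (inv_nonneg.mpr (sub_pos.mpr hq).le) (pow_le_one₀ (norm_nonneg q) hq.le)

theorem norm_mul_lambertTerm_le (hq : ‖q‖ < 1) {x : 𝕜} {C : ℝ} (hx : ‖x‖ ≤ C) (n : ℕ) :
    ‖x * lambertTerm q n‖ ≤ C * (1 - ‖q‖)⁻¹ :=
  (norm_mul_le _ _).trans <| mul_le_mul hx (norm_lambertTerm_le_inv hq n) (norm_nonneg _)
    ((norm_nonneg x).trans hx)

theorem pow_succ_ne_one_of_norm_lt_one (hq : ‖q‖ < 1) (n : ℕ) : q ^ (n + 1) ≠ 1 :=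
  ne_of_apply_ne norm <| by
    rw [norm_pow, norm_one]
    exact (pow_lt_one₀ (norm_nonneg q) hq n.succ_ne_zero).ne

theorem summable_norm_lambertTerm (hq : ‖q‖ < 1) : Summable fun n ↦ ‖lambertTerm q (n + 1)‖ :=
  (summable_nat_add_iff 1).mpr <| .of_nonneg_of_le (fun _ ↦ norm_nonneg _) (norm_lambertTerm_le hq)
    ((summable_geometric_of_lt_one (norm_nonneg q) hq).mul_left _)

theorem summable_norm_lambertTerm_add (hq : ‖q‖ < 1) :
    Summable fun p : ℕ × ℕ ↦ ‖lambertTerm q (p.1 + p.2 + 2)‖ := by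
  have hgeom := summable_geometric_of_lt_one (norm_nonneg q) hq
  have hprod : Summable fun p : ℕ × ℕ ↦ ‖q‖ ^ p.1 * ‖q‖ ^ p.2 :=
    hgeom.mul_of_nonneg hgeom (fun n ↦ by positivity) fun n ↦ by positivity
  refine .of_nonneg_of_le (fun _ ↦ norm_nonneg _) (fun p ↦ ?_)
    (hprod.mul_left ((1 - ‖q‖)⁻¹ * ‖q‖ ^ 2))
  calc ‖lambertTerm q (p.1 + p.2 + 2)‖ ≤ (1 - ‖q‖)⁻¹ * ‖q‖ ^ (p.1 + p.2 + 2) :=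
        norm_lambertTerm_le hq _
    _ = (1 - ‖q‖)⁻¹ * ‖q‖ ^ 2 * (‖q‖ ^ p.1 * ‖q‖ ^ p.2) := by ring

theorem summable_norm_lambertTerm_mul (hq : ‖q‖ < 1) :
    Summable fun p : ℕ × ℕ ↦ ‖lambertTerm q (p.1 + 1) * lambertTerm q (p.2 + 1)‖ :=
  Summable.mul_norm (f := fun n ↦ lambertTerm q (n + 1)) (g := fun n ↦ lambertTerm q (n + 1))
    (summable_norm_lambertTerm hq) (summable_norm_lambertTerm hq)

end LambertTerm

section WeightedSums

variable {𝕜 : Type*} [NormedField 𝕜] [CompleteSpace 𝕜] {q : 𝕜}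

theorem hasSum_weight_add_mul_lambertTerm_mul (hq : ‖q‖ < 1) {c : ℕ → 𝕜} {C : ℝ}
    (hc : ∀ n, ‖c n‖ ≤ C) :
    HasSum (fun n ↦ c (n + 1) * lambertTerm q (n + 1)
        * (n + 2 * ∑ i ∈ Finset.range n, lambertTerm q (i + 1)))
      (∑' p : ℕ × ℕ, c (p.1 + p.2 + 2)
        * (lambertTerm q (p.1 + 1) * lambertTerm q (p.2 + 1))) := by
  have hsummable := summable_mul_of_norm_le (fun p : ℕ × ℕ ↦ hc (p.1 + p.2 + 2))
    (summable_norm_lambertTerm_mul hq)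
  have hantidiag (n : ℕ) : ∑ p ∈ antidiagonal n,
      c (p.1 + p.2 + 2) * (lambertTerm q (p.1 + 1) * lambertTerm q (p.2 + 1))
        = c (n + 2) * lambertTerm q (n + 2)
          * (n + 1 + 2 * ∑ i ∈ Finset.range (n + 1), lambertTerm q (i + 1)) := by
    rw [← sum_antidiagonal_one_add_add, Finset.mul_sum]
    refine Finset.sum_congr rfl fun p hp ↦ ?_
    have hmul := lambertTerm_mul_lambertTerm (pow_succ_ne_one_of_norm_lt_one hq p.1)
      (pow_succ_ne_one_of_norm_lt_one hq p.2) (pow_succ_ne_one_of_norm_lt_one hq _)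
    rw [add_add_add_comm, Finset.HasAntidiagonal.mem_antidiagonal.mp hp] at hmul
    rw [Finset.HasAntidiagonal.mem_antidiagonal.mp hp, hmul, mul_assoc]
  have hsucc := (hasSum_sum_antidiagonal hsummable.hasSum).congr_fun fun n ↦ (hantidiag n).symm
  simpa using HasSum.zero_add (f := fun n : ℕ ↦ c (n + 1) * lambertTerm q (n + 1)
    * (n + 2 * ∑ i ∈ Finset.range n, lambertTerm q (i + 1))) (by exact_mod_cast hsucc)

theorem hasSum_lambertTerm_sub_lambertTerm_add (hq : ‖q‖ < 1) (k : ℕ) :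
    HasSum (fun i ↦ lambertTerm q (i + 1) - lambertTerm q (i + k + 2))
      (∑ i ∈ Finset.range (k + 1), lambertTerm q (i + 1)) := by
  have h := (summable_norm_lambertTerm hq).of_norm
  have hshift := (hasSum_nat_add_iff' (k + 1)).mpr h.hasSum
  have hsub := h.hasSum.sub hshift
  rw [sub_sub_cancel] at hsub
  exact hsub.congr_fun fun i ↦ by simp only [add_assoc, one_add_one_eq_two]

theorem hasSum_weight_mul_lambertTerm_add (hq : ‖q‖ < 1) {c : ℕ → 𝕜} {C : ℝ}
    (hc : ∀ n, ‖c n‖ ≤ C) :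
    HasSum (fun n ↦ lambertTerm q (n + 1) * ∑ k ∈ Finset.range n, c (k + 1))
      (∑' p : ℕ × ℕ, c (p.1 + 1) * lambertTerm q (p.1 + p.2 + 2)) := by
  have hsummable := summable_mul_of_norm_le (fun p : ℕ × ℕ ↦ hc (p.1 + 1))
    (summable_norm_lambertTerm_add hq)
  have hantidiag (n : ℕ) : ∑ p ∈ antidiagonal n, c (p.1 + 1) * lambertTerm q (p.1 + p.2 + 2)
      = lambertTerm q (n + 2) * ∑ k ∈ Finset.range (n + 1), c (k + 1) := by
    rw [← Finset.Nat.sum_antidiagonal_eq_sum_range_succ (fun k _ ↦ c (k + 1)), Finset.mul_sum]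
    refine Finset.sum_congr rfl fun p hp ↦ ?_
    rw [Finset.HasAntidiagonal.mem_antidiagonal.mp hp, mul_comm]
  have hsucc := (hasSum_sum_antidiagonal hsummable.hasSum).congr_fun fun n ↦ (hantidiag n).symm
  simpa using HasSum.zero_add (f := fun n ↦
    lambertTerm q (n + 1) * ∑ k ∈ Finset.range n, c (k + 1)) hsucc

theorem summable_weight_mul_lambertTerm_mul_lambertTerm_add (hq : ‖q‖ < 1) {c : ℕ → 𝕜}
    {C : ℝ} (hc : ∀ n, ‖c n‖ ≤ C) :
    Summable fun p : ℕ × ℕ ↦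
      c (p.1 + 1) * (lambertTerm q (p.2 + 1) * lambertTerm q (p.1 + p.2 + 2)) :=
  (summable_mul_of_norm_le (fun p : ℕ × ℕ ↦ norm_mul_lambertTerm_le hq (hc (p.1 + 1)) (p.2 + 1))
    (summable_norm_lambertTerm_add hq)).congr fun _ ↦ mul_assoc _ _ _

theorem hasSum_weight_mul_lambertTerm_mul_lambertTerm_add (hq : ‖q‖ < 1) {c : ℕ → 𝕜}
    {C : ℝ} (hc : ∀ n, ‖c n‖ ≤ C) :
    HasSum (fun n ↦ c (n + 1) * lambertTerm q (n + 1)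
          * ∑ i ∈ Finset.range (n + 1), lambertTerm q (i + 1)
        - lambertTerm q (n + 1) * ∑ k ∈ Finset.range n, c (k + 1))
      (∑' p : ℕ × ℕ, c (p.1 + 1)
        * (lambertTerm q (p.2 + 1) * lambertTerm q (p.1 + p.2 + 2))) := by
  have hprod := summable_mul_of_norm_le (fun p : ℕ × ℕ ↦ hc (p.1 + 1))
    (summable_norm_lambertTerm_mul hq)
  have hshift := summable_mul_of_norm_le
    (fun p : ℕ × ℕ ↦ norm_mul_lambertTerm_le hq (hc (p.1 + 1)) (p.1 + 1))
    (summable_norm_lambertTerm_add hq)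
  have htail := summable_mul_of_norm_le (fun p : ℕ × ℕ ↦ hc (p.1 + 1))
    (summable_norm_lambertTerm_add hq)
  have hfiber := (hprod.sub hshift).hasSum.prod_fiberwise fun k ↦
    ((hasSum_lambertTerm_sub_lambertTerm_add hq k).mul_left
      (c (k + 1) * lambertTerm q (k + 1))).congr_fun fun i ↦ by
        simp only [add_comm k i, mul_sub, mul_assoc]
  have htsum : ∑' p : ℕ × ℕ,
        c (p.1 + 1) * (lambertTerm q (p.2 + 1) * lambertTerm q (p.1 + p.2 + 2))
      = ∑' p : ℕ × ℕ, (c (p.1 + 1) * (lambertTerm q (p.1 + 1) * lambertTerm q (p.2 + 1))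
          - c (p.1 + 1) * lambertTerm q (p.1 + 1) * lambertTerm q (p.1 + p.2 + 2))
        - ∑' p : ℕ × ℕ, c (p.1 + 1) * lambertTerm q (p.1 + p.2 + 2) := by
    rw [← (hprod.sub hshift).tsum_sub htail]
    refine tsum_congr fun p ↦ ?_
    have hmul := lambertTerm_mul_lambertTerm_add (pow_succ_ne_one_of_norm_lt_one hq p.2)
      (pow_succ_ne_one_of_norm_lt_one hq p.1) (pow_succ_ne_one_of_norm_lt_one hq _)
    rw [add_add_add_comm, add_comm p.2 p.1, one_add_one_eq_two] at hmul
    rw [hmul]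
    ring
  rw [htsum]
  exact hfiber.sub (hasSum_weight_mul_lambertTerm_add hq hc)

theorem hasSum_weight_sub_sub_weight_add_mul_lambertTerm_mul (hq : ‖q‖ < 1) {c : ℤ → 𝕜} {C : ℝ}
    (hc_even : c.Even) (hc : ∀ k, ‖c k‖ ≤ C) :
    HasSum (fun n : ℕ ↦ c 0 * lambertTerm q (n + 1) ^ 2
        + c (n + 1) * lambertTerm q (n + 1) * (2 * lambertTerm q (n + 1) - n)
        - 2 * (lambertTerm q (n + 1) * ∑ k ∈ Finset.range n, c (k + 1)))
      (∑' p : ℕ × ℕ, (c (p.1 - p.2) - c (p.1 + p.2 + 2))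
        * (lambertTerm q (p.1 + 1) * lambertTerm q (p.2 + 1))) := by
  have hdiag : Summable fun n ↦ c 0 * lambertTerm q (n + 1) ^ 2 :=
    (summable_mul_of_norm_le (fun n ↦ norm_mul_lambertTerm_le hq (hc 0) (n + 1))
      (summable_norm_lambertTerm hq)).congr fun n ↦ by ring
  have hupper := summable_weight_mul_lambertTerm_mul_lambertTerm_add hq
    (c := fun n : ℕ ↦ c n) fun n ↦ hc n
  have hupper_sum := hasSum_weight_mul_lambertTerm_mul_lambertTerm_add hq
    (c := fun n : ℕ ↦ c n) fun n ↦ hc n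
  have hadd := hasSum_weight_add_mul_lambertTerm_mul hq (c := fun n : ℕ ↦ c n) fun n ↦ hc n
  push_cast at hupper hupper_sum hadd
  have hsub : HasSum (fun p : ℕ × ℕ ↦ c (p.1 - p.2)
      * (lambertTerm q (p.1 + 1) * lambertTerm q (p.2 + 1))) _ :=
    hasSum_of_hasSum_diag_upper_lower (hdiag.hasSum.congr_fun fun n ↦ by simp [sq])
      (hupper.hasSum.congr_fun fun p ↦ by
        rw [← hc_even]
        push_cast
        ring_nf)
      (hupper.hasSum.congr_fun fun p ↦ by
        push_cast
        ring_nf)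
  have hprod := summable_mul_of_norm_le (fun p : ℕ × ℕ ↦ hc (p.1 + p.2 + 2))
    (summable_norm_lambertTerm_mul hq)
  simp only [sub_mul]
  rw [hsub.summable.tsum_sub hprod, hsub.tsum_eq]
  refine ((hdiag.hasSum.add (hupper_sum.add hupper_sum)).sub hadd).congr_fun fun n ↦ ?_
  rw [Finset.sum_range_succ]
  ring

end WeightedSums

section Trigonometry

theorem cot_half_mul_sin_sub_sin {t : ℝ} (ht : Real.sin (t / 2) ≠ 0) (x : ℝ) :
    Real.cot (t / 2) * (Real.sin (x + t) - Real.sin x) = Real.cos x + Real.cos (x + t) := by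
  rw [Real.sin_sub_sin, add_comm (Real.cos x), Real.cos_add_cos,
    Real.cot_eq_cos_div_sin, add_sub_cancel_left]
  field_simp

theorem cot_half_mul_sin_eq_sum_cos {t : ℝ} (ht : Real.sin (t / 2) ≠ 0) (n : ℕ) :
    Real.cot (t / 2) * Real.sin ((n + 1) * t)
      = 1 + 2 * ∑ k ∈ Finset.range n, Real.cos ((k + 1) * t) + Real.cos ((n + 1) * t) := by
  induction n with
  | zero => simpa using cot_half_mul_sin_sub_sin ht 0
  | succ n ih =>
    have hstep := cot_half_mul_sin_sub_sin ht ((n + 1) * t)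
    rw [← add_one_mul] at hstep
    rw [Finset.sum_range_succ]
    push_cast
    linear_combination hstep + ih

theorem sin_two_pi_div_three : Real.sin (2 * Real.pi / 3) = √3 / 2 := by
  rw [← Real.sin_pi_div_three, ← Real.sin_pi_sub]
  ring_nf

theorem cos_two_pi_div_three : Real.cos (2 * Real.pi / 3) = -1 / 2 := by
  have h := Real.cos_pi_sub (Real.pi / 3)
  rw [Real.cos_pi_div_three] at h
  rw [neg_div, ← h]
  ring_nf

theorem natCast_mul_two_pi_div_three (n : ℕ) :
    (n : ℝ) * (2 * Real.pi / 3)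
      = (n % 3 : ℕ) * (2 * Real.pi / 3) + (n / 3 : ℕ) * (2 * Real.pi) := by
  nth_rw 1 [← Nat.mod_add_div n 3]
  push_cast
  ring

theorem sin_natCast_mul_two_pi_div_three (n : ℕ) :
    (Real.sin (n * (2 * Real.pi / 3)) : ℂ) = √3 / 2 * χ₃ n := by
  have hmod : n % 3 < 3 := Nat.mod_lt n three_pos
  rw [natCast_mul_two_pi_div_three, Real.sin_add_nat_mul_two_pi, χ₃]
  interval_cases n % 3
  · simp
  · simp [sin_two_pi_div_three]
  · rw [Nat.cast_ofNat, Real.sin_two_mul, sin_two_pi_div_three, cos_two_pi_div_three]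
    norm_num
    ring

theorem cos_natCast_mul_two_pi_div_three (n : ℕ) :
    Real.cos (n * (2 * Real.pi / 3)) = if 3 ∣ n then 1 else -1 / 2 := by
  have hmod : n % 3 < 3 := Nat.mod_lt n three_pos
  rw [natCast_mul_two_pi_div_three, Real.cos_add_nat_mul_two_pi]
  simp only [Nat.dvd_iff_mod_eq_zero]
  interval_cases n % 3
  · simp
  · simp [cos_two_pi_div_three]
  · rw [Nat.cast_ofNat, Real.cos_two_mul, cos_two_pi_div_three]
    norm_num

end Trigonometry

section DivisorSums

variable {𝕜 : Type*} [NormedField 𝕜] {q : 𝕜}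

theorem hasSum_sum_divisors_mul_pow {a : ℕ → 𝕜}
    (ha : Summable fun p : ℕ+ × ℕ+ ↦ a p.2 * q ^ (p.1 * p.2 : ℕ)) :
    HasSum (fun n : ℕ ↦ (∑ d ∈ (n + 1).divisors, a d) * q ^ (n + 1))
      (∑' p : ℕ+ × ℕ+, a p.2 * q ^ (p.1 * p.2 : ℕ)) := by
  refine hasSum_pnat_iff_hasSum_succ (f := fun n ↦ (∑ d ∈ n.divisors, a d) * q ^ n) |>.mp ?_
  refine (sigmaAntidiagonalEquivProd.hasSum_iff.mpr ha.hasSum).sigma fun n ↦ ?_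
  have hfiber : (∑ d ∈ (n : ℕ).divisors, a d) * q ^ (n : ℕ)
      = ∑ p : (n : ℕ).divisorsAntidiagonal, a p.1.2 * q ^ (p.1.1 * p.1.2) := by
    rw [Finset.sum_coe_sort _ fun p : ℕ × ℕ ↦ a p.2 * q ^ (p.1 * p.2),
      Nat.sum_divisorsAntidiagonal' fun i j ↦ a j * q ^ (i * j), Finset.sum_mul]
    exact Finset.sum_congr rfl fun d hd ↦ by rw [Nat.div_mul_cancel (Nat.dvd_of_mem_divisors hd)]
  rw [hfiber]
  exact hasSum_fintype _

theorem norm_pow_pnat_lt_one (hq : ‖q‖ < 1) (n : ℕ+) : ‖q ^ (n : ℕ)‖ < 1 := by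
  rw [norm_pow]
  exact pow_lt_one₀ (norm_nonneg q) hq n.ne_zero

theorem hasSum_mul_lambertTerm (hq : ‖q‖ < 1) {a : ℕ → 𝕜}
    (ha : Summable fun p : ℕ+ × ℕ+ ↦ a p.2 * q ^ (p.1 * p.2 : ℕ)) :
    HasSum (fun n ↦ a (n + 1) * lambertTerm q (n + 1))
      (∑' n : ℕ, (∑ d ∈ (n + 1).divisors, a d) * q ^ (n + 1)) := by
  rw [(hasSum_sum_divisors_mul_pow ha).tsum_eq]
  refine hasSum_pnat_iff_hasSum_succ (f := fun n ↦ a n * lambertTerm q n) |>.mp ?_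
  refine ((Equiv.prodComm ℕ+ ℕ+).hasSum_iff.mpr ha.hasSum).prod_fiberwise fun n ↦ ?_
  have hgeom := (hasSum_geometric_of_norm_lt_one (norm_pow_pnat_lt_one hq n)).mul_left
    (a n * q ^ (n : ℕ))
  rw [mul_assoc, ← div_eq_mul_inv, ← lambertTerm] at hgeom
  refine hasSum_pnat_iff_hasSum_succ (f := fun m : ℕ ↦ a n * q ^ (m * n)) |>.mpr ?_
  exact hgeom.congr_fun fun m ↦ by ring

end DivisorSums

section SumOfDivisors

variable {𝕜 : Type*} [NontriviallyNormedField 𝕜] [CompleteSpace 𝕜] [NormSMulClass ℤ 𝕜] {q : 𝕜}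

theorem hasSum_natCast_mul_lambertTerm (hq : ‖q‖ < 1) :
    HasSum (fun n : ℕ ↦ (n + 1) * lambertTerm q (n + 1))
      (∑' n : ℕ, (∑ d ∈ (n + 1).divisors, (d : 𝕜)) * q ^ (n + 1)) := by
  simpa using hasSum_mul_lambertTerm hq (a := fun n ↦ (n : 𝕜))
    (by simpa using summable_prod_mul_pow 1 hq)

theorem hasSum_lambertTerm_mul_one_add (hq : ‖q‖ < 1) :
    HasSum (fun n ↦ lambertTerm q (n + 1) * (1 + lambertTerm q (n + 1)))
      (∑' n : ℕ, (∑ d ∈ (n + 1).divisors, (d : 𝕜)) * q ^ (n + 1)) := by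
  have hsummable : Summable fun p : ℕ+ × ℕ+ ↦ ((p.2 : ℕ) : 𝕜) * q ^ (p.1 * p.2 : ℕ) := by
    simpa using summable_prod_mul_pow 1 hq
  rw [(hasSum_sum_divisors_mul_pow hsummable).tsum_eq]
  refine hasSum_pnat_iff_hasSum_succ
    (f := fun n ↦ lambertTerm q n * (1 + lambertTerm q n)) |>.mp ?_
  refine hsummable.hasSum.prod_fiberwise fun m ↦ ?_
  have hden : 1 - q ^ (m : ℕ) ≠ 0 :=
    sub_ne_zero.mpr (ne_of_apply_ne norm (by simpa using (norm_pow_pnat_lt_one hq m).ne'))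
  have hvalue : lambertTerm q m * (1 + lambertTerm q m) = q ^ (m : ℕ) / (1 - q ^ (m : ℕ)) ^ 2 := by
    rw [lambertTerm]
    field_simp
    ring
  rw [hvalue]
  have hgeom := hasSum_coe_mul_geometric_of_norm_lt_one (norm_pow_pnat_lt_one hq m)
  refine (hasSum_pnat_iff (f := fun n : ℕ ↦ (n : 𝕜) * q ^ (m * n : ℕ))).mpr ?_
  simpa [pow_mul] using hgeom

end SumOfDivisors

section Ramanujan

variable {q : ℂ}

theorem summable_norm_lambertTerm_mul_sin (hq : ‖q‖ < 1) (t : ℝ) :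
    Summable fun n : ℕ ↦ ‖lambertTerm q (n + 1) * (Real.sin ((n + 1) * t) : ℂ)‖ := by
  refine .of_nonneg_of_le (fun _ ↦ norm_nonneg _) (fun n ↦ ?_) (summable_norm_lambertTerm hq)
  rw [norm_mul, Complex.norm_real]
  exact mul_le_of_le_one_right (norm_nonneg _) (Real.abs_sin_le_one _)

theorem two_mul_tsum_lambertTerm_mul_sin_sq (hq : ‖q‖ < 1) (t : ℝ) :
    2 * (∑' n : ℕ, lambertTerm q (n + 1) * (Real.sin ((n + 1) * t) : ℂ)) ^ 2
      = ∑' p : ℕ × ℕ, ((Real.cos ((p.1 - p.2 : ℤ) * t) : ℂ)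
          - (Real.cos ((p.1 + p.2 + 2 : ℤ) * t) : ℂ))
        * (lambertTerm q (p.1 + 1) * lambertTerm q (p.2 + 1)) := by
  have hs := summable_norm_lambertTerm_mul_sin hq t
  rw [sq, tsum_mul_tsum_of_summable_norm hs hs, ← tsum_mul_left]
  refine tsum_congr fun p ↦ ?_
  have hsin := Real.two_mul_sin_mul_sin ((p.1 + 1) * t) ((p.2 + 1) * t)
  rw [← sub_mul, ← add_mul, add_sub_add_right_eq_sub, add_add_add_comm, one_add_one_eq_two] at hsin
  rw [← Complex.ofReal_sub]
  simp only [Int.cast_sub, Int.cast_add, Int.cast_natCast, Int.cast_ofNat]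
  rw [← hsin]
  push_cast
  ring

theorem hasSum_cot_mul_lambertTerm_mul_sin (hq : ‖q‖ < 1) {t : ℝ} (ht : Real.sin (t / 2) ≠ 0) :
    HasSum (fun n : ℕ ↦ lambertTerm q (n + 1)
        * (1 + 2 * ∑ k ∈ Finset.range n, (Real.cos ((k + 1) * t) : ℂ)
          + (Real.cos ((n + 1) * t) : ℂ)))
      (Real.cot (t / 2) * ∑' n : ℕ, lambertTerm q (n + 1) * (Real.sin ((n + 1) * t) : ℂ)) := by
  refine ((summable_norm_lambertTerm_mul_sin hq t).of_norm.hasSum.mul_left _).congr_fun fun n ↦ ?_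
  rw [mul_left_comm, ← Complex.ofReal_mul, cot_half_mul_sin_eq_sum_cos ht]
  push_cast
  rfl

theorem hasSum_two_mul_tsum_lambertTerm_mul_sin_sq (hq : ‖q‖ < 1) (t : ℝ) :
    HasSum (fun n : ℕ ↦ lambertTerm q (n + 1) ^ 2
        + (Real.cos ((n + 1) * t) : ℂ) * lambertTerm q (n + 1) * (2 * lambertTerm q (n + 1) - n)
        - 2 * (lambertTerm q (n + 1) * ∑ k ∈ Finset.range n, (Real.cos ((k + 1) * t) : ℂ)))
      (2 * (∑' n : ℕ, lambertTerm q (n + 1) * (Real.sin ((n + 1) * t) : ℂ)) ^ 2) := by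
  have hcos_even : Function.Even fun k : ℤ ↦ (Real.cos (k * t) : ℂ) := fun k ↦ by
    simp only [Int.cast_neg, neg_mul, Real.cos_neg]
  have hcos_le (k : ℤ) : ‖(Real.cos (k * t) : ℂ)‖ ≤ 1 := by
    rw [Complex.norm_real]
    exact Real.abs_cos_le_one _
  rw [two_mul_tsum_lambertTerm_mul_sin_sq hq]
  exact (hasSum_weight_sub_sub_weight_add_mul_lambertTerm_mul hq hcos_even hcos_le).congr_fun
    fun n ↦ by simp

/-- **Ramanujan's identity** expressing the square of
`cot (t / 2) / 4 + ∑ sin (n t) qⁿ / (1 - qⁿ)` as a single Lambert series. -/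
theorem hasSum_sq_cot_add_tsum_lambertTerm_mul_sin (hq : ‖q‖ < 1) {t : ℝ}
    (ht : Real.sin (t / 2) ≠ 0) :
    HasSum (fun n : ℕ ↦
        lambertTerm q (n + 1) * (1 + lambertTerm q (n + 1)) * (Real.cos ((n + 1) * t) : ℂ)
          + (n + 1) / 2 * lambertTerm q (n + 1) * (1 - (Real.cos ((n + 1) * t) : ℂ)))
      ((Real.cot (t / 2) / 4
          + ∑' n : ℕ, lambertTerm q (n + 1) * (Real.sin ((n + 1) * t) : ℂ)) ^ 2
        - (Real.cot (t / 2) / 4) ^ 2) := by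
  have hsq := hasSum_two_mul_tsum_lambertTerm_mul_sin_sq hq t
  have hcot := hasSum_cot_mul_lambertTerm_mul_sin hq ht
  have hzero := (hasSum_natCast_mul_lambertTerm hq).sub (hasSum_lambertTerm_mul_one_add hq)
  rw [sub_self] at hzero
  have hsum := ((hsq.add hcot).add hzero).mul_left (1 / 2)
  have hvalue : (Real.cot (t / 2) / 4
        + ∑' n : ℕ, lambertTerm q (n + 1) * (Real.sin ((n + 1) * t) : ℂ)) ^ 2
          - (Real.cot (t / 2) / 4) ^ 2
      = 1 / 2 * (2 * (∑' n : ℕ, lambertTerm q (n + 1) * (Real.sin ((n + 1) * t) : ℂ)) ^ 2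
        + Real.cot (t / 2) * ∑' n : ℕ, lambertTerm q (n + 1) * (Real.sin ((n + 1) * t) : ℂ)
        + 0) := by ring
  rw [hvalue]
  exact hsum.congr_fun fun n ↦ by ring

end Ramanujan

theorem hasSum_ite_dvd_succ {E : Type*} [AddCommMonoid E] [TopologicalSpace E] {f : ℕ → E} {s : E}
    {m : ℕ} (hm : m ≠ 0) (hf : HasSum (fun n ↦ f (m * (n + 1))) s) :
    HasSum (fun n ↦ if m ∣ n + 1 then f (n + 1) else 0) s := by
  have hpos (n : ℕ) : m * (n + 1) - 1 + 1 = m * (n + 1) :=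
    Nat.sub_add_cancel (Nat.mul_pos hm.bot_lt n.succ_pos)
  have hinj : Function.Injective fun n ↦ m * (n + 1) - 1 := fun a b hab ↦ by
    have := congrArg (· + 1) hab
    simpa [hpos, hm] using this
  refine (hinj.hasSum_iff fun n hn ↦ if_neg ?_).mp (hf.congr_fun fun n ↦ ?_)
  · rintro ⟨k, hk⟩
    have hk0 : k ≠ 0 := right_ne_zero_of_mul (hk ▸ n.add_one_ne_zero)
    refine hn ⟨k - 1, ?_⟩
    change m * (k - 1 + 1) - 1 = n
    rw [Nat.sub_one_add_one hk0, ← hk, Nat.add_sub_cancel]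
  · simp only [Function.comp_apply, hpos, dvd_mul_right, if_true]

section TwoPiDivThree

variable {q : ℂ}

theorem hasSum_χ₃_mul_lambertTerm (hq : ‖q‖ < 1) :
    HasSum (fun n ↦ χ₃ (n + 1) * lambertTerm q (n + 1))
      (∑' n : ℕ, (∑ d ∈ (n + 1).divisors, χ₃ d) * q ^ (n + 1)) := by
  have hχ₃ (n : ℕ) : ‖χ₃ n‖ ≤ 1 := by
    unfold χ₃
    split_ifs <;> simp
  refine hasSum_mul_lambertTerm hq (summable_mul_of_norm_le (fun p : ℕ+ × ℕ+ ↦ hχ₃ p.2) ?_)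
  simpa using (summable_prod_mul_pow 0 hq).norm

theorem tsum_lambertTerm_mul_sin_two_pi_div_three (hq : ‖q‖ < 1) :
    ∑' n : ℕ, lambertTerm q (n + 1) * (Real.sin ((n + 1) * (2 * Real.pi / 3)) : ℂ)
      = √3 / 2 * ∑' n : ℕ, (∑ d ∈ (n + 1).divisors, χ₃ d) * q ^ (n + 1) := by
  refine (((hasSum_χ₃_mul_lambertTerm hq).mul_left _).congr_fun fun n ↦ ?_).tsum_eq
  rw [← Nat.cast_succ, sin_natCast_mul_two_pi_div_three]
  ring

theorem hasSum_lambertTerm_mul_cos_two_pi_div_three (hq : ‖q‖ < 1) :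
    HasSum (fun n : ℕ ↦ lambertTerm q (n + 1) * (1 + lambertTerm q (n + 1))
          * (Real.cos ((n + 1) * (2 * Real.pi / 3)) : ℂ)
        + (n + 1) / 2 * lambertTerm q (n + 1)
          * (1 - (Real.cos ((n + 1) * (2 * Real.pi / 3)) : ℂ)))
      (1 / 4 * ∑' n : ℕ, (∑ d ∈ (n + 1).divisors, (d : ℂ)) * q ^ (n + 1)
        - 3 / 4 * ∑' n : ℕ, (∑ d ∈ (n + 1).divisors, (d : ℂ)) * (q ^ 3) ^ (n + 1)) := by
  have hq3 : ‖q ^ 3‖ < 1 := by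
    rw [norm_pow]
    exact pow_lt_one₀ (norm_nonneg q) hq three_ne_zero
  have hthird := ((hasSum_lambertTerm_mul_one_add hq3).mul_left (3 / 2)).sub
    ((hasSum_natCast_mul_lambertTerm hq3).mul_left (9 / 4))
  simp only [lambertTerm_pow] at hthird
  have hsieve := hasSum_ite_dvd_succ (m := 3) three_ne_zero
    (f := fun n ↦ 3 / 2 * (lambertTerm q n * (1 + lambertTerm q n)) - 3 / 4 * (n * lambertTerm q n))
    (hthird.congr_fun fun n ↦ by push_cast; ring)
  have hrest := ((hasSum_natCast_mul_lambertTerm hq).mul_left (3 / 4)).sub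
    ((hasSum_lambertTerm_mul_one_add hq).mul_left (1 / 2))
  set P := ∑' n : ℕ, (∑ d ∈ (n + 1).divisors, (d : ℂ)) * q ^ (n + 1)
  set P₃ := ∑' n : ℕ, (∑ d ∈ (n + 1).divisors, (d : ℂ)) * (q ^ 3) ^ (n + 1)
  have hvalue : 1 / 4 * P - 3 / 4 * P₃ = 3 / 2 * P₃ - 9 / 4 * P₃ + (3 / 4 * P - 1 / 2 * P) := by
    ring
  rw [hvalue]
  refine (hsieve.add hrest).congr_fun fun n ↦ ?_
  rw [← Nat.cast_succ, cos_natCast_mul_two_pi_div_three]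
  split_ifs <;> push_cast <;> ring

theorem three_mul_sq_tsum_χ₃_add_tsum_χ₃ (hq : ‖q‖ < 1) :
    3 * (∑' n : ℕ, (∑ d ∈ (n + 1).divisors, χ₃ d) * q ^ (n + 1)) ^ 2
        + ∑' n : ℕ, (∑ d ∈ (n + 1).divisors, χ₃ d) * q ^ (n + 1)
      = ∑' n : ℕ, (∑ d ∈ (n + 1).divisors, (d : ℂ)) * q ^ (n + 1)
        - 3 * ∑' n : ℕ, (∑ d ∈ (n + 1).divisors, (d : ℂ)) * (q ^ 3) ^ (n + 1) := by
  have hhalf : 2 * Real.pi / 3 / 2 = Real.pi / 3 := by ring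
  have hcot : (√3 * Real.cot (2 * Real.pi / 3 / 2) : ℂ) = 1 := by
    rw [hhalf, Real.cot_eq_cos_div_sin, Real.cos_pi_div_three, Real.sin_pi_div_three]
    norm_cast
    field_simp
  have hsqrt : (√3 : ℂ) ^ 2 = 3 := by
    norm_cast
    exact Real.sq_sqrt zero_le_three
  have hsin : Real.sin (2 * Real.pi / 3 / 2) ≠ 0 := by
    rw [hhalf, Real.sin_pi_div_three]
    positivity
  have hram := (hasSum_sq_cot_add_tsum_lambertTerm_mul_sin hq hsin).unique
    (hasSum_lambertTerm_mul_cos_two_pi_div_three hq)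
  rw [tsum_lambertTerm_mul_sin_two_pi_div_three hq] at hram
  set Y := ∑' n : ℕ, (∑ d ∈ (n + 1).divisors, χ₃ d) * q ^ (n + 1)
  linear_combination 4 * hram - Y ^ 2 * hsqrt - Y * hcot

end TwoPiDivThree

theorem qq_three_mul (τ : ℂ) : qq (3 * τ) = qq τ ^ 3 := by
  rw [qq, qq, ← Complex.exp_nat_mul]
  push_cast
  ring_nf

theorem norm_qq_lt_one {τ : ℂ} (hτ : 0 < τ.im) : ‖qq τ‖ < 1 := by
  simpa [qq] using UpperHalfPlane.norm_exp_two_pi_I_lt_one ⟨τ, hτ⟩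

theorem stmt11 (τ : ℂ) (hτ : 0 < τ.im) :
    E₃₂ τ = 36 * E₁₃ τ ^ 2 := by
  have h := three_mul_sq_tsum_χ₃_add_tsum_χ₃ (norm_qq_lt_one hτ)
  simp only [E₃₂, E₂, E₁₃, qq_three_mul, sigmaC, pow_one]
  linear_combination (-12) * h
end
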